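/- Let a ≥ 2 be a real number and take t_i = (i+a)/a in GFPGM (the method FPGM-a); these t_i satisfy t_i > 0 and t_i² ≤ T_i. Then for every N ≥ 1, F(x_N) − F(x_*) ≤ a L R² / (N(N + 2a − 1)). -/

import Mathlib

open scoped RealInnerProductSpace

/-!
Write `F = f + φ`. The proximal model at `y` is `L`-strongly convex, so it grows at least like
`L/2 ‖z - p y‖²` away from its minimizer `p y`; the descent lemma bounds it from below at `p y` and
the gradient inequality bounds it from above at `z`. Together these give
`F (p y) + L/2 ‖p y - y‖² ≤ F z + L ⟪z - y, p y - y⟫` for every `z`.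

Let `z_0 = x_0` and `z_{i+1} = z_i + t_i (x_{i+1} - y_i)`. The GFPGM recursion says that
`T_i y_i = t_i z_i + (T_i - t_i) x_i`. Adding the inequality above at a point `w` with weight `t_i`
and at `x_i` with weight `T_i - t_i = T_{i-1}`, and using `t_i² ≤ T_i`, shows that
`T_{i-1} (F x_i - F w) + L/2 ‖z_i - w‖²` is nonincreasing. Hence
`F x_N - F w ≤ L ‖x_0 - w‖² / (2 T_{N-1})`, and `T_{N-1} = N (N + 2a - 1) / (2a)` for FPGM-a.
-/

section NormedSpace

variable {E : Type*} [NormedAddCommGroup E] [NormedSpace ℝ E]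

lemma add_fderiv_sub_le_of_convexOn {s : Set E} {f : E → ℝ} {f' : E →L[ℝ] ℝ} {y z : E}
    (hf : ConvexOn ℝ s f) (hy : y ∈ s) (hz : z ∈ s) (hf' : HasFDerivAt f f' y) :
    f y + f' (z - y) ≤ f z := by
  let γ : ℝ →ᵃ[ℝ] E := AffineMap.lineMap y z
  have hγ₀ : γ 0 = y := AffineMap.lineMap_apply_zero y z
  have hγ₁ : γ 1 = z := AffineMap.lineMap_apply_one y z
  have hderiv : HasDerivAt (f ∘ γ) (f' (z - y)) 0 := by
    rw [← hγ₀] at hf'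
    exact hf'.comp_hasDerivAt 0 AffineMap.hasDerivAt_lineMap
  have hslope := (hf.comp_affineMap γ).le_slope_of_hasDerivAt (by rwa [Set.mem_preimage, hγ₀])
    (by rwa [Set.mem_preimage, hγ₁]) one_pos hderiv
  rw [slope_def_field, Function.comp_apply, Function.comp_apply, hγ₀, hγ₁, sub_zero,
    div_one] at hslope
  linarith

lemma le_add_fderiv_sub_add_sq_of_lipschitz {L : ℝ} {f : E → ℝ} {f' : E → E →L[ℝ] ℝ} {y : E}
    (hf' : ∀ u, HasFDerivAt f (f' u) u) (hLip : ∀ u, ‖f' u - f' y‖ ≤ L * ‖u - y‖) (z : E) :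
    f z ≤ f y + f' y (z - y) + L / 2 * ‖z - y‖ ^ 2 := by
  set γ : ℝ →ᵃ[ℝ] E := AffineMap.lineMap y z with hγ
  have hleft (s : ℝ) : HasDerivAt (f ∘ γ) (f' (γ s) (z - y)) s :=
    (hf' (γ s)).comp_hasDerivAt s AffineMap.hasDerivAt_lineMap
  have hright (s : ℝ) : HasDerivAt
      (fun s => f y + s * f' y (z - y) + L / 2 * ‖z - y‖ ^ 2 * s ^ 2)
      (f' y (z - y) + L * s * ‖z - y‖ ^ 2) s := by
    refine ((((hasDerivAt_id s).mul_const _).const_add _).add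
      ((hasDerivAt_pow 2 s).const_mul _)).congr_deriv ?_
    push_cast
    ring
  have hderiv_le (s : ℝ) (hs : 0 ≤ s) :
      f' (γ s) (z - y) ≤ f' y (z - y) + L * s * ‖z - y‖ ^ 2 := by
    have hdist : ‖γ s - y‖ = s * ‖z - y‖ := by
      simp [hγ, AffineMap.lineMap_apply, norm_smul, abs_of_nonneg hs]
    have hle : (f' (γ s) - f' y) (z - y) ≤ L * s * ‖z - y‖ ^ 2 :=
      calc (f' (γ s) - f' y) (z - y)
        _ ≤ ‖f' (γ s) - f' y‖ * ‖z - y‖ := (le_abs_self _).trans ((f' (γ s) - f' y).le_opNorm _)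
        _ ≤ L * ‖γ s - y‖ * ‖z - y‖ := by gcongr; exact hLip _
        _ = L * s * ‖z - y‖ ^ 2 := by rw [hdist]; ring
    rw [sub_apply] at hle
    linarith
  have hcomp := image_le_of_deriv_right_le_deriv_boundary
    (fun s _ => (hleft s).continuousAt.continuousWithinAt)
    (fun s _ => (hleft s).hasDerivWithinAt) (by simp [hγ])
    (fun s _ => (hright s).continuousAt.continuousWithinAt)
    (fun s _ => (hright s).hasDerivWithinAt) (fun s hs => hderiv_le s hs.1)
    (Set.right_mem_Icc.2 zero_le_one)
  simpa [hγ] using hcomp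

lemma add_sq_le_of_strongConvexOn_of_isMinOn {s : Set E} {m : ℝ} {g : E → ℝ} {q z : E}
    (hg : StrongConvexOn s m g) (hmin : IsMinOn g s q) (hq : q ∈ s) (hz : z ∈ s) :
    g q + m / 2 * ‖z - q‖ ^ 2 ≤ g z := by
  set B := m / 2 * ‖z - q‖ ^ 2
  have hsegment : ∀ r ∈ Set.Ioo (0 : ℝ) 1, g q + (1 - r) * B ≤ g z := by
    intro r hr
    have hr' : 0 ≤ 1 - r := sub_nonneg.2 hr.2.le
    have hmem : r • z + (1 - r) • q ∈ s := hg.1 hz hq hr.1.le hr' (by ring)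
    have hle : g q ≤ r * g z + (1 - r) * g q - r * (1 - r) * B :=
      (hmin hmem).trans (hg.2 hz hq hr.1.le hr' (by ring))
    refine le_of_mul_le_mul_left ?_ hr.1
    linarith
  have hlim : Filter.Tendsto (fun r : ℝ => g q + (1 - r) * B) (nhdsWithin 0 (Set.Ioi 0))
      (nhds (g q + B)) := by
    have hcont : Continuous fun r : ℝ => g q + (1 - r) * B := by fun_prop
    simpa using (hcont.tendsto 0).mono_left nhdsWithin_le_nhds
  exact le_of_tendsto hlim (Filter.eventually_of_mem (Ioo_mem_nhdsGT zero_lt_one) hsegment)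

end NormedSpace

section ProxGrad

variable {E : Type*} [NormedAddCommGroup E] [InnerProductSpace ℝ E]

/-- The proximal model of `f + φ` at `y`: `f` is replaced by its linearization at `y`, with `f'` in
the role of the gradient, plus the quadratic penalty `L/2 ‖z - y‖²`. -/
noncomputable def proxGradModel (L : ℝ) (f : E → ℝ) (f' : E → E) (φ : E → ℝ) (y z : E) : ℝ :=
  f y + ⟪f' y, z - y⟫ + L / 2 * ‖z - y‖ ^ 2 + φ z

/-- `q` is a proximal gradient step from `y`, i.e. a possible value of the proximal gradient map
at `y`. A relation is used because the model need not have a minimizer. -/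
def IsProxGradStep (L : ℝ) (f : E → ℝ) (f' : E → E) (φ : E → ℝ) (y q : E) : Prop :=
  IsMinOn (proxGradModel L f f' φ y) Set.univ q

variable {L : ℝ} {f : E → ℝ} {f' : E → E} {φ : E → ℝ}

lemma strongConvexOn_proxGradModel (hφ : ConvexOn ℝ Set.univ φ) (y : E) :
    StrongConvexOn Set.univ L (proxGradModel L f f' φ y) := by
  rw [strongConvexOn_iff_convex]
  have hlin := (innerSL ℝ (f' y - L • y)).toLinearMap.convexOn convex_univ
  refine ((hlin.add hφ).add_const (f y - ⟪f' y, y⟫ + L / 2 * ‖y‖ ^ 2)).congr fun z _ => ?_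
  simp only [proxGradModel, Pi.add_apply, ContinuousLinearMap.coe_coe, innerSL_apply_apply,
    inner_sub_left, inner_sub_right, real_inner_smul_left, norm_sub_sq_real, real_inner_comm z y]
  ring

lemma IsProxGradStep.cost_add_sq_le {y q : E} (hq : IsProxGradStep L f f' φ y q)
    (hf : ConvexOn ℝ Set.univ f) (hgrad : ∀ z, HasFDerivAt f (innerSL ℝ (f' z)) z)
    (hLip : ∀ u v, ‖f' u - f' v‖ ≤ L * ‖u - v‖) (hφ : ConvexOn ℝ Set.univ φ) (z : E) :
    f q + φ q + L / 2 * ‖q - y‖ ^ 2 ≤ f z + φ z + L * ⟪z - y, q - y⟫ := by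
  have hdescent : f q ≤ f y + ⟪f' y, q - y⟫ + L / 2 * ‖q - y‖ ^ 2 :=
    le_add_fderiv_sub_add_sq_of_lipschitz hgrad
      (fun u => by rw [← map_sub, innerSL_apply_norm]; exact hLip u y) q
  have hgrowth : proxGradModel L f f' φ y q + L / 2 * ‖z - q‖ ^ 2 ≤ proxGradModel L f f' φ y z :=
    add_sq_le_of_strongConvexOn_of_isMinOn (strongConvexOn_proxGradModel hφ y) hq
      (Set.mem_univ q) (Set.mem_univ z)
  have hconvex : f y + ⟪f' y, z - y⟫ ≤ f z :=
    add_fderiv_sub_le_of_convexOn hf (Set.mem_univ y) (Set.mem_univ z) (hgrad y)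
  have hsq : ‖z - q‖ ^ 2 = ‖z - y‖ ^ 2 - 2 * ⟪z - y, q - y⟫ + ‖q - y‖ ^ 2 := by
    rw [← sub_sub_sub_cancel_right z q y, norm_sub_sq_real]
  unfold proxGradModel at hgrowth
  rw [hsq] at hgrowth
  linarith

end ProxGrad

section GFPGM

/-- The partial sums `T_i = t_0 + ⋯ + t_i` of the GFPGM parameters, last index included. -/
def cumWeight (t : ℕ → ℝ) (i : ℕ) : ℝ := ∑ l ∈ Finset.range (i + 1), t l

lemma cumWeight_zero (t : ℕ → ℝ) : cumWeight t 0 = t 0 := Finset.sum_range_one t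

lemma cumWeight_succ (t : ℕ → ℝ) (i : ℕ) : cumWeight t (i + 1) = cumWeight t i + t (i + 1) :=
  Finset.sum_range_succ t (i + 1)

lemma cumWeight_pos {t : ℕ → ℝ} (ht : ∀ i, 0 < t i) (i : ℕ) : 0 < cumWeight t i :=
  Finset.sum_pos (fun l _ => ht l) Finset.nonempty_range_add_one

lemma le_cumWeight {t : ℕ → ℝ} (ht : ∀ i, 0 ≤ t i) (i : ℕ) : t i ≤ cumWeight t i :=
  Finset.single_le_sum (fun l _ => ht l) (Finset.self_mem_range_succ i)

variable {E : Type*} [NormedAddCommGroup E] [InnerProductSpace ℝ E]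

/-- `x` and `y` are the primary and the extrapolated iterates of the generalized fast proximal
gradient method for `f + φ` with parameters `t`. -/
structure IsGFPGM (L : ℝ) (f : E → ℝ) (f' : E → E) (φ : E → ℝ) (t : ℕ → ℝ) (x y : ℕ → E) :
    Prop where
  initial : y 0 = x 0
  step (i : ℕ) : IsProxGradStep L f f' φ (y i) (x (i + 1))
  extrapolate (i : ℕ) : y (i + 1) = x (i + 1)
    + ((cumWeight t i - t i) * t (i + 1) / (t i * cumWeight t (i + 1))) • (x (i + 1) - x i)
    + ((t i ^ 2 - cumWeight t i) * t (i + 1) / (t i * cumWeight t (i + 1))) • (x (i + 1) - y i)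

/-- The auxiliary points `z_i`, with `z_0 = x_0` and `z_{i+1} = z_i + t_i (x_{i+1} - y_i)`, of which
the extrapolated iterates of GFPGM are averages with the primary ones. -/
def gfpgmAux (t : ℕ → ℝ) (x y : ℕ → E) (i : ℕ) : E :=
  x 0 + ∑ j ∈ Finset.range i, t j • (x (j + 1) - y j)

lemma gfpgmAux_zero (t : ℕ → ℝ) (x y : ℕ → E) : gfpgmAux t x y 0 = x 0 := by
  simp [gfpgmAux]

lemma gfpgmAux_succ (t : ℕ → ℝ) (x y : ℕ → E) (i : ℕ) :
    gfpgmAux t x y (i + 1) = gfpgmAux t x y i + t i • (x (i + 1) - y i) := by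
  simp only [gfpgmAux, Finset.sum_range_succ, add_assoc]

/-- The Lyapunov function of GFPGM for the cost `F` and the comparison point `w`. The factor
`cumWeight t i - t i` is `T_{i-1}`, and `0` for `i = 0`. -/
noncomputable def gfpgmPotential (L : ℝ) (F : E → ℝ) (t : ℕ → ℝ) (x y : ℕ → E) (w : E)
    (i : ℕ) : ℝ :=
  (cumWeight t i - t i) * (F (x i) - F w) + L / 2 * ‖gfpgmAux t x y i - w‖ ^ 2

lemma gfpgmPotential_zero (L : ℝ) (F : E → ℝ) (t : ℕ → ℝ) (x y : ℕ → E) (w : E) :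
    gfpgmPotential L F t x y w 0 = L / 2 * ‖x 0 - w‖ ^ 2 := by
  simp [gfpgmPotential, cumWeight_zero, gfpgmAux_zero]

lemma gfpgmPotential_succ (L : ℝ) (F : E → ℝ) (t : ℕ → ℝ) (x y : ℕ → E) (w : E) (i : ℕ) :
    gfpgmPotential L F t x y w (i + 1) = cumWeight t i * (F (x (i + 1)) - F w)
      + L / 2 * ‖gfpgmAux t x y i + t i • (x (i + 1) - y i) - w‖ ^ 2 := by
  rw [gfpgmPotential, cumWeight_succ, add_sub_cancel_right, gfpgmAux_succ]

lemma weighted_cost_add_sq_le {L τ S : ℝ} {F : E → ℝ} {u w y q z : E} (hL : 0 ≤ L) (hτ : 0 ≤ τ)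
    (hτS : τ ≤ S) (hsq : τ ^ 2 ≤ S)
    (hq : ∀ v, F q + L / 2 * ‖q - y‖ ^ 2 ≤ F v + L * ⟪v - y, q - y⟫)
    (hy : S • y = τ • z + (S - τ) • u) :
    S * (F q - F w) + L / 2 * ‖z + τ • (q - y) - w‖ ^ 2
      ≤ (S - τ) * (F u - F w) + L / 2 * ‖z - w‖ ^ 2 := by
  have hw := mul_le_mul_of_nonneg_left (hq w) hτ
  have hu := mul_le_mul_of_nonneg_left (hq u) (sub_nonneg.2 hτS)
  have hinner : τ * ⟪w - y, q - y⟫ + (S - τ) * ⟪u - y, q - y⟫ = -(τ * ⟪z - w, q - y⟫) := by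
    have hvec : τ • (w - y) + (S - τ) • (u - y) = -(τ • (z - w)) := by
      linear_combination (norm := module) (-1 : ℝ) • hy
    rw [← real_inner_smul_left, ← real_inner_smul_left, ← real_inner_smul_left, ← inner_add_left,
      hvec, inner_neg_left]
  have hexpand : ‖z + τ • (q - y) - w‖ ^ 2
      = ‖z - w‖ ^ 2 + 2 * (τ * ⟪z - w, q - y⟫) + τ ^ 2 * ‖q - y‖ ^ 2 := by
    rw [add_sub_right_comm, norm_add_sq_real, inner_smul_right, norm_smul, mul_pow,
      Real.norm_eq_abs, sq_abs]
  have hslack : 0 ≤ L / 2 * ((S - τ ^ 2) * ‖q - y‖ ^ 2) :=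
    mul_nonneg (by positivity) (mul_nonneg (sub_nonneg.2 hsq) (sq_nonneg _))
  rw [hexpand]
  linear_combination hw + hu + hslack + L * hinner

namespace IsGFPGM

variable {L : ℝ} {f : E → ℝ} {f' : E → E} {φ : E → ℝ} {t : ℕ → ℝ} {x y : ℕ → E}

lemma cumWeight_smul_eq (h : IsGFPGM L f f' φ t x y) (ht : ∀ i, 0 < t i) (i : ℕ) :
    cumWeight t i • y i = t i • gfpgmAux t x y i + (cumWeight t i - t i) • x i := by
  induction i with
  | zero => simp [cumWeight_zero, gfpgmAux_zero, h.initial]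
  | succ i ih =>
    have hti := (ht i).ne'
    have hT : cumWeight t i + t (i + 1) ≠ 0 := cumWeight_succ t i ▸ (cumWeight_pos ht (i + 1)).ne'
    have haux : gfpgmAux t x y i
        = (t i)⁻¹ • (cumWeight t i • y i - (cumWeight t i - t i) • x i) := by
      rw [ih, add_sub_cancel_right, inv_smul_smul₀ hti]
    rw [h.extrapolate, gfpgmAux_succ, haux, cumWeight_succ]
    match_scalars <;> field_simp <;> ring

lemma antitone_potential (h : IsGFPGM L f f' φ t x y) (hL : 0 ≤ L)
    (hf : ConvexOn ℝ Set.univ f) (hgrad : ∀ z, HasFDerivAt f (innerSL ℝ (f' z)) z)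
    (hLip : ∀ u v, ‖f' u - f' v‖ ≤ L * ‖u - v‖) (hφ : ConvexOn ℝ Set.univ φ)
    (ht : ∀ i, 0 < t i) (htT : ∀ i, t i ^ 2 ≤ cumWeight t i) (w : E) :
    Antitone (gfpgmPotential L (fun z => f z + φ z) t x y w) := by
  refine antitone_nat_of_succ_le fun i => ?_
  rw [gfpgmPotential_succ]
  exact weighted_cost_add_sq_le (F := fun z => f z + φ z) hL (ht i).le
    (le_cumWeight (fun l => (ht l).le) i) (htT i)
    ((h.step i).cost_add_sq_le hf hgrad hLip hφ) (h.cumWeight_smul_eq ht i)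

theorem cost_sub_le (h : IsGFPGM L f f' φ t x y) (hL : 0 ≤ L)
    (hf : ConvexOn ℝ Set.univ f) (hgrad : ∀ z, HasFDerivAt f (innerSL ℝ (f' z)) z)
    (hLip : ∀ u v, ‖f' u - f' v‖ ≤ L * ‖u - v‖) (hφ : ConvexOn ℝ Set.univ φ)
    (ht : ∀ i, 0 < t i) (htT : ∀ i, t i ^ 2 ≤ cumWeight t i) (w : E) (n : ℕ) :
    f (x (n + 1)) + φ (x (n + 1)) - (f w + φ w) ≤ L * ‖x 0 - w‖ ^ 2 / (2 * cumWeight t n) := by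
  have hpot := h.antitone_potential hL hf hgrad hLip hφ ht htT w (Nat.zero_le (n + 1))
  rw [gfpgmPotential_zero, gfpgmPotential_succ] at hpot
  have hnonneg : 0 ≤ L / 2 * ‖gfpgmAux t x y n + t n • (x (n + 1) - y n) - w‖ ^ 2 := by positivity
  rw [le_div_iff₀ (mul_pos two_pos (cumWeight_pos ht n))]
  linarith

end IsGFPGM

end GFPGM

section FPGM

/-- The parameters `t_i = (i + a) / a` of FPGM-a. -/
noncomputable def fpgmWeight (a : ℝ) (i : ℕ) : ℝ := ((i : ℝ) + a) / a

lemma fpgmWeight_pos {a : ℝ} (ha : 0 < a) (i : ℕ) : 0 < fpgmWeight a i := by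
  unfold fpgmWeight
  positivity

lemma cumWeight_fpgmWeight {a : ℝ} (ha : a ≠ 0) (i : ℕ) :
    cumWeight (fpgmWeight a) i = ((i : ℝ) + 1) * ((i : ℝ) + 2 * a) / (2 * a) := by
  induction i with
  | zero =>
    simp only [cumWeight_zero, fpgmWeight, Nat.cast_zero]
    field_simp
    ring
  | succ i ih =>
    rw [cumWeight_succ, ih, fpgmWeight]
    push_cast
    field_simp
    ring

lemma fpgmWeight_sq_le_cumWeight {a : ℝ} (ha : 2 ≤ a) (i : ℕ) :
    fpgmWeight a i ^ 2 ≤ cumWeight (fpgmWeight a) i := by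
  have ha₀ : a ≠ 0 := by positivity
  have hdiff : cumWeight (fpgmWeight a) i - fpgmWeight a i ^ 2
      = i * ((a - 2) * i + a * (2 * (a - 2) + 1)) / (2 * a ^ 2) := by
    rw [cumWeight_fpgmWeight ha₀, fpgmWeight]
    field_simp
    ring
  have ha₂ : 0 ≤ a - 2 := sub_nonneg.2 ha
  rw [← sub_nonneg, hdiff]
  positivity [ha₂]

end FPGM

theorem fpgm_a_cost_bound_general {E : Type*} [NormedAddCommGroup E] [InnerProductSpace ℝ E]
    {L : ℝ} {f : E → ℝ} {f' : E → E} {φ : E → ℝ} {w : E} {R a : ℝ} {x y : ℕ → E} {N : ℕ}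
    (hL : 0 ≤ L) (hf : ConvexOn ℝ Set.univ f)
    (hgrad : ∀ z, HasFDerivAt f (innerSL ℝ (f' z)) z)
    (hLip : ∀ u v, ‖f' u - f' v‖ ≤ L * ‖u - v‖) (hφ : ConvexOn ℝ Set.univ φ) (ha : 2 ≤ a)
    (h : IsGFPGM L f f' φ (fpgmWeight a) x y) (hR : ‖x 0 - w‖ ≤ R) (hN : 1 ≤ N) :
    (∀ i, 0 < fpgmWeight a i ∧ fpgmWeight a i ^ 2 ≤ cumWeight (fpgmWeight a) i) ∧
      f (x N) + φ (x N) - (f w + φ w)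
        ≤ a * L * R ^ 2 / ((N : ℝ) * ((N : ℝ) + 2 * a - 1)) := by
  have ha₀ : 0 < a := two_pos.trans_le ha
  have ht := fpgmWeight_pos ha₀
  have htT := fpgmWeight_sq_le_cumWeight ha
  refine ⟨fun i => ⟨ht i, htT i⟩, ?_⟩
  obtain ⟨n, rfl⟩ := Nat.exists_eq_add_of_le' hN
  have hT := cumWeight_pos ht n
  calc f (x (n + 1)) + φ (x (n + 1)) - (f w + φ w)
    _ ≤ L * ‖x 0 - w‖ ^ 2 / (2 * cumWeight (fpgmWeight a) n) :=
      h.cost_sub_le hL hf hgrad hLip hφ ht htT w n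
    _ ≤ L * R ^ 2 / (2 * cumWeight (fpgmWeight a) n) := by gcongr
    _ = a * L * R ^ 2 / (((n + 1 : ℕ) : ℝ) * (((n + 1 : ℕ) : ℝ) + 2 * a - 1)) := by
      have hden : ((n + 1 : ℕ) : ℝ) + 2 * a - 1 = n + 2 * a := by push_cast; ring
      rw [cumWeight_fpgmWeight ha₀.ne', hden]
      push_cast
      field_simp

/-- FPGM-a, i.e. GFPGM with t_i = (i+a)/a for a real a ≥ 2, has valid
parameters (t_i > 0 and t_i² ≤ T_i) and satisfies
F(x_N) − F(x_*) ≤ aLR²/(N(N+2a−1)) for every N ≥ 1. -/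
theorem fpgm_a_cost_bound
    {E : Type*} [NormedAddCommGroup E] [InnerProductSpace ℝ E]
    (L : ℝ) (hL : 0 < L)
    (f : E → ℝ) (f' : E → E) (φ : E → ℝ)
    (hf : ConvexOn ℝ Set.univ f)
    (hgrad : ∀ z : E, HasFDerivAt f (innerSL ℝ (f' z)) z)
    (hLip : ∀ u v : E, ‖f' u - f' v‖ ≤ L * ‖u - v‖)
    (hφ : ConvexOn ℝ Set.univ φ)
    (p : E → E)
    (hp : ∀ y : E, IsMinOn
      (fun z => f y + ⟪f' y, z - y⟫ + L / 2 * ‖z - y‖ ^ 2 + φ z) Set.univ (p y))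
    (xs : E) (hxs : IsMinOn (fun z => f z + φ z) Set.univ xs)
    (R : ℝ) (hR0 : 0 ≤ R)
    (a : ℝ) (ha : 2 ≤ a)
    (t T : ℕ → ℝ) (ht : ∀ i, t i = ((i : ℝ) + a) / a)
    (hT : ∀ i, T i = ∑ l ∈ Finset.range (i + 1), t l)
    (x y : ℕ → E)
    (hy0 : y 0 = x 0)
    (hx : ∀ i, x (i + 1) = p (y i))
    (hy : ∀ i, y (i + 1) = x (i + 1)
        + ((T i - t i) * t (i + 1) / (t i * T (i + 1))) • (x (i + 1) - x i)
        + ((t i ^ 2 - T i) * t (i + 1) / (t i * T (i + 1))) • (x (i + 1) - y i))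
    (hR : ‖x 0 - xs‖ ≤ R)
    (N : ℕ) (hN : 1 ≤ N) :
    (∀ i, 0 < t i ∧ t i ^ 2 ≤ T i) ∧
      f (x N) + φ (x N) - (f xs + φ xs)
        ≤ a * L * R ^ 2 / ((N : ℝ) * ((N : ℝ) + 2 * a - 1)) := by
  obtain rfl : t = fpgmWeight a := funext ht
  obtain rfl : T = cumWeight (fpgmWeight a) := funext hT
  exact fpgm_a_cost_bound_general hL.le hf hgrad hLip hφ ha
    ⟨hy0, fun i => (hx i).symm ▸ hp (y i), hy⟩ hR hN
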